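/- arXiv:math/0601254 — 2 statements merged into one kernel-verified Lean document; each statement's English description precedes it below -/
import Mathlib

section
/- Let H be a finite-dimensional complex inner product space, let L be a commutative subspace lattice on H, and let Φ : Alg L → Alg L be a rank preserving linear map such that every element of L that is nonzero with N₋ ≠ H is consistent with respect to Φ. Then Φ(I) is invertible, the map Ψ defined by Ψ(A) = A·Φ(I)⁻¹ maps Alg L into Alg L, and there exists an invertible linear operator U on H such that (Ψ ∘ Φ)(A) = U A U⁻¹ for all A ∈ Alg L; in particular Ψ ∘ Φ is a unital, multiplicative, injective linear map on Alg L. -/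
open scoped InnerProductSpace

noncomputable section

/-- The join (closed linear span) of a family of subspaces of a Hilbert space. -/
def closedJoin {H : Type*} [NormedAddCommGroup H] [InnerProductSpace ℂ H]
    (S : Set (Submodule ℂ H)) : Submodule ℂ H :=
  (sSup S).topologicalClosure

/-- A subspace lattice on `H`: a family of closed subspaces containing `{0}` and `H`,
closed under arbitrary intersections and arbitrary closed linear spans. -/
structure IsSubspaceLattice {H : Type*} [NormedAddCommGroup H] [InnerProductSpace ℂ H]
    (L : Set (Submodule ℂ H)) : Prop where
  isClosed : ∀ E ∈ L, IsClosed (E : Set H)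
  bot_mem : ⊥ ∈ L
  top_mem : ⊤ ∈ L
  sInf_mem : ∀ S : Set (Submodule ℂ H), S ⊆ L → sInf S ∈ L
  join_mem : ∀ S : Set (Submodule ℂ H), S ⊆ L → closedJoin S ∈ L

/-- `M₋`: the join of all members of `L` that do not contain `M`. -/
def minus {H : Type*} [NormedAddCommGroup H] [InnerProductSpace ℂ H]
    (L : Set (Submodule ℂ H)) (M : Submodule ℂ H) : Submodule ℂ H :=
  closedJoin {E | E ∈ L ∧ ¬ M ≤ E}

open Classical in
/-- The orthogonal projection of `H` onto a closed subspace `E`, as an operator on `H`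
(junk value `0` if `E` is not closed). -/
def projOf {H : Type*} [NormedAddCommGroup H] [InnerProductSpace ℂ H] [CompleteSpace H]
    (E : Submodule ℂ H) : H →L[ℂ] H :=
  if h : IsClosed (E : Set H) then
    haveI : CompleteSpace E := h.completeSpace_coe
    E.subtypeL.comp (Submodule.orthogonalProjectionOnto E)
  else 0

/-- A commutative subspace lattice: the orthogonal projections onto members commute. -/
structure IsCSL {H : Type*} [NormedAddCommGroup H] [InnerProductSpace ℂ H] [CompleteSpace H]
    (L : Set (Submodule ℂ H)) extends IsSubspaceLattice L : Prop where
  commutes : ∀ E ∈ L, ∀ F ∈ L, projOf E * projOf F = projOf F * projOf E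

/-- Complete distributivity of the lattice `L` (meets are intersections, joins are
closed linear spans). -/
def IsCompletelyDistributive {H : Type*} [NormedAddCommGroup H] [InnerProductSpace ℂ H]
    (L : Set (Submodule ℂ H)) : Prop :=
  ∀ (I : Type) (J : I → Type) (E : (i : I) → J i → Submodule ℂ H),
    (∀ i j, E i j ∈ L) →
     ((⨅ i, closedJoin (Set.range (E i)))
        = closedJoin (Set.range fun φ : (∀ i, J i) => ⨅ i, E i (φ i)))
    ∧ (closedJoin (Set.range fun i => ⨅ j, E i j)
        = ⨅ φ : (∀ i, J i), closedJoin (Set.range fun i => E i (φ i)))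

/-- `Alg L`: all bounded operators leaving every member of `L` invariant. -/
def algL {H : Type*} [NormedAddCommGroup H] [InnerProductSpace ℂ H]
    (L : Set (Submodule ℂ H)) : Set (H →L[ℂ] H) :=
  {T | ∀ E ∈ L, ∀ x ∈ E, T x ∈ E}

/-- The rank one operator `x ⊗ f* : h ↦ ⟨h, f⟩ x`. -/
def rankOne {H : Type*} [NormedAddCommGroup H] [InnerProductSpace ℂ H]
    (x f : H) : H →L[ℂ] H :=
  (innerSL ℂ f).smulRight x

/-- The rank of a bounded operator: the dimension of its range. -/
def opRank {H : Type*} [NormedAddCommGroup H] [InnerProductSpace ℂ H]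
    (T : H →L[ℂ] H) : Cardinal :=
  Module.rank ℂ (LinearMap.range (T : H →ₗ[ℂ] H))

/-- `Φ` is a linear map of `Alg L` into itself. -/
structure IsLinearOnAlg {H : Type*} [NormedAddCommGroup H] [InnerProductSpace ℂ H]
    (L : Set (Submodule ℂ H)) (Φ : (H →L[ℂ] H) → (H →L[ℂ] H)) : Prop where
  maps : ∀ A ∈ algL L, Φ A ∈ algL L
  map_add : ∀ A ∈ algL L, ∀ B ∈ algL L, Φ (A + B) = Φ A + Φ B
  map_smul : ∀ (c : ℂ), ∀ A ∈ algL L, Φ (c • A) = c • Φ A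

/-- `Φ` preserves the rank of every finite rank operator in `Alg L`. -/
def RankPreserving {H : Type*} [NormedAddCommGroup H] [InnerProductSpace ℂ H]
    (L : Set (Submodule ℂ H)) (Φ : (H →L[ℂ] H) → (H →L[ℂ] H)) : Prop :=
  ∀ A ∈ algL L, opRank A < Cardinal.aleph0 → opRank (Φ A) = opRank A

/-- `a ∼ b`: (nonzero) vectors `a` and `b` are linearly dependent. -/
def Dep {H : Type*} [NormedAddCommGroup H] [InnerProductSpace ℂ H] (a b : H) : Prop :=
  ∃ c : ℂ, c ≠ 0 ∧ b = c • a

/-- `N` is consistent with respect to `Φ`. -/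
def Consistent {H : Type*} [NormedAddCommGroup H] [InnerProductSpace ℂ H]
    (L : Set (Submodule ℂ H)) (Φ : (H →L[ℂ] H) → (H →L[ℂ] H))
    (N : Submodule ℂ H) : Prop :=
  N ≠ ⊥ ∧ minus L N ≠ ⊤ ∧
    ∃ (U : N →ₗ[ℂ] H) (V : ((minus L N)ᗮ : Submodule ℂ H) →ₗ[ℂ] H),
      ∀ (x : N) (f : ((minus L N)ᗮ : Submodule ℂ H)),
        Φ (rankOne (x : H) (f : H)) = rankOne (U x) (V f)

/-- `N` is twisted with respect to `Φ`. -/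
def Twisted {H : Type*} [NormedAddCommGroup H] [InnerProductSpace ℂ H]
    (L : Set (Submodule ℂ H)) (Φ : (H →L[ℂ] H) → (H →L[ℂ] H))
    (N : Submodule ℂ H) : Prop :=
  N ≠ ⊥ ∧ minus L N ≠ ⊤ ∧
    ∃ (U : ((minus L N)ᗮ : Submodule ℂ H) →ₗ⋆[ℂ] H) (V : N →ₗ⋆[ℂ] H),
      ∀ (x : N) (f : ((minus L N)ᗮ : Submodule ℂ H)),
        Φ (rankOne (x : H) (f : H)) = rankOne (U f) (V x)

/-- `N` is isolated: `dim N = 1` and `N^⊥ ∈ L`. -/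
def Isolated {H : Type*} [NormedAddCommGroup H] [InnerProductSpace ℂ H]
    (L : Set (Submodule ℂ H)) (N : Submodule ℂ H) : Prop :=
  Module.rank ℂ N = 1 ∧ Nᗮ ∈ L

/-- The family `F` of all `N ∈ L` with `N ≠ {0}` and `N₋ ≠ H`. -/
def famF {H : Type*} [NormedAddCommGroup H] [InnerProductSpace ℂ H]
    (L : Set (Submodule ℂ H)) : Set (Submodule ℂ H) :=
  {N | N ∈ L ∧ N ≠ ⊥ ∧ minus L N ≠ ⊤}

/-- Subspaces are comparable if one contains the other. -/
def Comparable' {H : Type*} [NormedAddCommGroup H] [InnerProductSpace ℂ H]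
    (M N : Submodule ℂ H) : Prop :=
  M ≤ N ∨ N ≤ M

/-- There is a chain in `F` from `M` to `N`. -/
def ChainConn {H : Type*} [NormedAddCommGroup H] [InnerProductSpace ℂ H]
    (L : Set (Submodule ℂ H)) (M N : Submodule ℂ H) : Prop :=
  ∃ (n : ℕ) (c : Fin (n + 1) → Submodule ℂ H),
    (∀ k, c k ∈ famF L) ∧ c 0 = M ∧ c (Fin.last n) = N ∧
      ∀ k : Fin n, Comparable' (c k.castSucc) (c k.succ)

/-- `𝔊_N`: all members of `F` that can be connected to `N` by a chain. -/
def GSet {H : Type*} [NormedAddCommGroup H] [InnerProductSpace ℂ H]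
    (L : Set (Submodule ℂ H)) (N : Submodule ℂ H) : Set (Submodule ℂ H) :=
  {M | M ∈ famF L ∧ ChainConn L N M}

end



noncomputable section Helpers

lemma rank_aux {ι : Type*} [Fintype ι] [DecidableEq ι] (A B : Matrix ι ι ℂ) (i j : ι) (κ : ℂ)
    (hκ : κ ≠ 0) (hB : B = A + κ • Matrix.single i j 1) (h1 : ∀ k, ∑ l, A k l = 0)
    (h2 : ∀ l, ∑ k, A k l = 0) : B.rank ≠ A.rank := by
  intro h
  have hBv : ∀ u : ι → ℂ, B.mulVec u = A.mulVec u + Pi.single i (κ * u j) := by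
    intro u
    rw [hB, Matrix.add_mulVec, Matrix.smul_mulVec, Matrix.single_mulVec]
    congr 1
    ext k
    by_cases hk : k = i
    · subst hk; simp
    · simp [hk, Function.update_of_ne]
  have hsum : ∀ u : ι → ℂ, ∑ k, (A.mulVec u) k = 0 := by
    intro u
    simp only [Matrix.mulVec, dotProduct]
    rw [Finset.sum_comm]
    simp [← Finset.sum_mul, h2]
  have hA1 : A.mulVec (fun _ => 1) = 0 := by
    ext k; simp [Matrix.mulVec, dotProduct, h1]
  have hlt : LinearMap.ker B.mulVecLin < LinearMap.ker A.mulVecLin := by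
    refine lt_of_le_of_ne ?_ ?_
    · intro u hu
      have hu' : B.mulVec u = 0 := hu
      have : κ * u j = 0 := by
        have := congrArg (fun v : ι → ℂ => ∑ k, v k) (hBv u)
        simp only [hu', Pi.add_apply, Finset.sum_add_distrib, hsum] at this
        simpa using this.symm
      rw [hBv u, this] at hu'
      simpa using hu'
    · intro he
      have : (fun _ => 1 : ι → ℂ) ∈ LinearMap.ker B.mulVecLin := by rw [he]; exact hA1
      have : B.mulVec (fun _ => 1 : ι → ℂ) = 0 := this
      rw [hBv, hA1] at this
      have := congrFun this i
      simp at this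
      exact hκ this
  have h3 := Submodule.finrank_lt_finrank_of_lt hlt
  have h4 := LinearMap.finrank_range_add_finrank_ker B.mulVecLin
  have h5 := LinearMap.finrank_range_add_finrank_ker A.mulVecLin
  simp only [Matrix.rank] at h
  omega

lemma fredholm_aux {ι : Type*} [Fintype ι] [DecidableEq ι] (R : Finset (ι × ι)) (e : ι × ι) :
    (∃ A : Matrix ι ι ℂ, (∀ p, p ∉ R → A p.1 p.2 = 0) ∧ (∀ k, ∑ l, A k l = 0) ∧
      (∀ l, ∑ k, A k l = 0) ∧ A e.1 e.2 ≠ 0) ∨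
    (∃ s t : ι → ℂ, ∀ p ∈ R, s p.1 + t p.2 = if p = e then 1 else 0) := by
  classical
  let m : ι × ι → ((ι × ι → ℂ) →ₗ[ℂ] ℂ) := fun p => if p ∈ R then LinearMap.proj p else 0
  have hm : ∀ p (a : ι × ι → ℂ), m p a = if p ∈ R then a p else 0 := by
    intro p a; simp only [m]; split_ifs <;> simp
  let F : ι ⊕ ι → ((ι × ι → ℂ) →ₗ[ℂ] ℂ) :=
    Sum.elim (fun k => ∑ l, m (k, l)) (fun l => ∑ k, m (k, l))
  by_cases h : ⨅ x, LinearMap.ker (F x) ≤ LinearMap.ker (m e)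
  · right
    have := mem_span_of_iInf_ker_le_ker h
    rw [Submodule.mem_span_range_iff_exists_fun] at this
    obtain ⟨w, hw⟩ := this
    refine ⟨fun k => w (Sum.inl k), fun l => w (Sum.inr l), fun p hp => ?_⟩
    have := congrArg (fun f => f (Pi.single p 1)) hw
    obtain ⟨p1, p2⟩ := p
    have key : ∀ q, m q (Pi.single (p1, p2) 1) = if q = (p1, p2) then 1 else 0 := by
      intro q
      rw [hm]
      by_cases hq : q = (p1, p2)
      · subst hq; simp [hp]
      · simp [hq]
    simp only [Fintype.sum_sum_type, F, Sum.elim_inl, Sum.elim_inr, LinearMap.add_apply,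
      LinearMap.sum_apply, LinearMap.smul_apply, key, Prod.mk.injEq, smul_eq_mul] at this
    simp only [ite_and, Finset.sum_ite_eq', Finset.mem_univ, if_true, Finset.sum_ite_irrel, Finset.sum_const_zero, mul_ite, mul_one, mul_zero] at this
    rw [this]
    simp [eq_comm]
  · left
    rw [SetLike.not_le_iff_exists] at h
    obtain ⟨a, ha, hb⟩ := h
    simp only [Submodule.mem_iInf, LinearMap.mem_ker] at ha hb
    refine ⟨Matrix.of fun k l => m (k, l) a, ?_, ?_, ?_, ?_⟩
    · intro p hp; simp [hm, hp]
    · intro k; simpa [F] using ha (Sum.inl k)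
    · intro k; simpa [F] using ha (Sum.inr k)
    · simpa using hb

lemma coboundary {ι : Type*} [Fintype ι] [DecidableEq ι] (c : ι → ι → ℂ) (R : Finset (ι × ι)) :
    (∀ p ∈ R, c p.1 p.2 ≠ 0) →
    (∀ M : Matrix ι ι ℂ, (∀ p, p ∉ R → M p.1 p.2 = 0) →
      (Matrix.of fun i j => c i j * M i j).rank = M.rank) →
    ∃ s t : ι → ℂ, (∀ i, s i ≠ 0) ∧ (∀ j, t j ≠ 0) ∧ ∀ p ∈ R, c p.1 p.2 = s p.1 * t p.2 := by
  classical
  induction R using Finset.induction_on with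
  | empty => intro _ _; exact ⟨1, 1, by simp, by simp, by simp⟩
  | insert e R heR ih =>
    intro hc hr
    obtain ⟨s, t, hs, ht, hst⟩ := ih (fun p hp => hc p (Finset.mem_insert_of_mem hp))
      (fun M hM => hr M (fun p hp => hM p (fun h => hp (Finset.mem_insert_of_mem h))))
    have hce := hc e (Finset.mem_insert_self _ _)
    set γ := c e.1 e.2 / (s e.1 * t e.2) with hγ
    have hγ0 : γ ≠ 0 := div_ne_zero hce (mul_ne_zero (hs _) (ht _))
    have hcγ : c e.1 e.2 = γ * (s e.1 * t e.2) := by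
      rw [hγ, div_mul_cancel₀ _ (mul_ne_zero (hs _) (ht _))]
    rcases fredholm_aux (insert e R) e with
      ⟨A, hA, h1, h2, hAe⟩ | ⟨s', t', hst'⟩
    · refine ⟨s, t, hs, ht, ?_⟩
      have hγ1 : γ = 1 := by
        by_contra hne
        refine rank_aux A (A + ((γ - 1) * A e.1 e.2) • Matrix.single e.1 e.2 1) e.1 e.2 _
          (mul_ne_zero (sub_ne_zero.2 hne) hAe) rfl h1 h2 ?_
        rw [← hr A hA]
        have : (Matrix.of fun i j => c i j * A i j) = Matrix.diagonal s *
            (A + ((γ - 1) * A e.1 e.2) • Matrix.single e.1 e.2 1) * Matrix.diagonal t := by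
          ext i j
          rw [Matrix.mul_diagonal, Matrix.diagonal_mul]
          simp only [Matrix.of_apply, Matrix.add_apply, Matrix.smul_apply, Matrix.single_apply]
          by_cases hij : (i, j) = e
          · subst hij
            simp only at hcγ
            simp [hcγ]; ring
          · have : ¬ (e.1 = i ∧ e.2 = j) := fun h => hij (by rw [← h.1, ← h.2])
            by_cases hR : (i, j) ∈ R
            · have := hst _ hR
              simp only at this
              rw [if_neg ‹¬ (e.1 = i ∧ e.2 = j)›, this, smul_zero, add_zero]; ring
            · have : A i j = 0 := hA (i, j) (by simp [hij, hR])
              rw [if_neg ‹¬ (e.1 = i ∧ e.2 = j)›, this, smul_zero, add_zero]; ring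
        rw [this, Matrix.rank_mul_eq_left_of_isUnit_det, Matrix.rank_mul_eq_right_of_isUnit_det]
        · simp [Matrix.det_diagonal, Finset.prod_ne_zero_iff, hs]
        · simp [Matrix.det_diagonal, Finset.prod_ne_zero_iff, ht]
      intro p hp
      rcases Finset.mem_insert.1 hp with rfl | hp
      · rw [hcγ, hγ1, one_mul]
      · exact hst p hp
    · refine ⟨fun i => s i * Complex.exp (Complex.log γ * s' i),
        fun i => t i * Complex.exp (Complex.log γ * t' i),
        fun i => mul_ne_zero (hs i) (Complex.exp_ne_zero _),
        fun i => mul_ne_zero (ht i) (Complex.exp_ne_zero _), ?_⟩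
      intro p hp
      have e1 : s p.1 * Complex.exp (Complex.log γ * s' p.1) *
          (t p.2 * Complex.exp (Complex.log γ * t' p.2)) =
          s p.1 * t p.2 * Complex.exp (Complex.log γ * (s' p.1 + t' p.2)) := by
        rw [mul_add, Complex.exp_add]; ring
      show _ = s p.1 * Complex.exp (Complex.log γ * s' p.1) *
          (t p.2 * Complex.exp (Complex.log γ * t' p.2))
      rw [e1, hst' p hp]
      rcases Finset.mem_insert.1 hp with rfl | hp'
      · simp [Complex.exp_log hγ0, hcγ]; ring
      · have : p ≠ e := fun h => heR (h ▸ hp')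
        simp [this, hst p hp']

lemma projOf_eq {H : Type*} [NormedAddCommGroup H] [InnerProductSpace ℂ H]
    [FiniteDimensional ℂ H] (E : Submodule ℂ H) :
    (projOf E : H →L[ℂ] H) = E.starProjection := by
  unfold projOf
  rw [dif_pos (Submodule.closed_of_finiteDimensional E)]
  rfl

lemma exists_adapted_basis {H : Type*} [NormedAddCommGroup H] [InnerProductSpace ℂ H]
    [FiniteDimensional ℂ H] (L : Set (Submodule ℂ H)) (hL : IsCSL L) :
    ∃ (n : ℕ) (b : Module.Basis (Fin n) ℂ H), ∀ E ∈ L, ∀ i,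
      b i ∈ E ∨ ∀ x ∈ E, b.coord i x = 0 := by
  let T : L → (H →ₗ[ℂ] H) := fun E => (E.1.starProjection : H →ₗ[ℂ] H)
  have hsym : ∀ E, (T E).IsSymmetric := fun E => E.1.starProjection_isSymmetric
  have hcomm : Pairwise (Function.onFun Commute T) := by
    intro E F _
    have h := hL.commutes E.1 E.2 F.1 F.2
    rw [projOf_eq, projOf_eq] at h
    ext x
    exact congrArg (fun f : H →L[ℂ] H => f x) h
  have htop := LinearMap.IsSymmetric.iSup_iInf_eq_top_of_commute hsym hcomm
  let S : Set H := {x | ∀ E ∈ L, x ∈ E ∨ E.starProjection x = 0}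
  have hS : ⊤ ≤ Submodule.span ℂ S := by
    rw [← htop]
    refine iSup_le fun χ x hx => Submodule.subset_span ?_
    intro E hE
    have h1 : (E.starProjection : H →L[ℂ] H) x = χ ⟨E, hE⟩ • x := by
      have := (Submodule.mem_iInf _).1 hx ⟨E, hE⟩
      exact Module.End.mem_eigenspace_iff.1 this
    by_cases h0 : χ ⟨E, hE⟩ = 0
    · right; rw [h1, h0, zero_smul]
    · left
      have : χ ⟨E, hE⟩ • x ∈ E := h1 ▸ E.starProjection_apply_mem x
      exact (E.smul_mem_iff h0).1 this
  let b0 := Module.Basis.ofSpan hS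
  let b := b0.reindex (b0.indexEquiv (Module.finBasis ℂ H))
  have hb : ∀ i, b i ∈ S := by
    intro i
    apply Module.Basis.ofSpan_subset hS
    simp only [b, Module.Basis.reindex_apply]
    exact Set.mem_range_self _
  refine ⟨_, b, fun E hE i => ?_⟩
  by_cases hi : b i ∈ E
  · exact Or.inl hi
  · right
    intro x hx
    classical
    have h1 : ((b.coord i) ∘ₗ (E.starProjection : H →ₗ[ℂ] H)) =
        if b i ∈ E then b.coord i else 0 := by
      rw [if_neg hi]
      apply b.ext
      intro j
      rcases hb j E hE with hj | hj
      · have hij : j ≠ i := fun h => hi (h ▸ hj)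
        simp [Submodule.starProjection_eq_self_iff.2 hj, hij]
      · simp [hj]
    have h2 := congrArg (fun f : H →ₗ[ℂ] ℂ => f x) h1
    simp only [if_neg hi] at h2
    have h3 := Submodule.starProjection_eq_self_iff.2 hx
    simpa [h3] using h2

lemma inverse_mem_alg {H : Type*} [NormedAddCommGroup H] [InnerProductSpace ℂ H]
    [FiniteDimensional ℂ H] (L : Set (Submodule ℂ H)) (P Q : H →L[ℂ] H)
    (hP : P ∈ algL L) (hQP : Q * P = 1) : Q ∈ algL L := by
  intro E hE x hx
  have hinj : Function.Injective (P : H →ₗ[ℂ] H) := by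
    intro x y hxy
    have : (Q * P) x = (Q * P) y := congrArg Q hxy
    simpa [hQP] using this
  have hle : E.map (P : H →ₗ[ℂ] H) ≤ E := by
    rintro _ ⟨y, hy, rfl⟩
    exact hP E hE y hy
  have heq : E.map (P : H →ₗ[ℂ] H) = E :=
    Submodule.eq_of_le_of_finrank_eq hle
      (LinearEquiv.finrank_eq (Submodule.equivMapOfInjective _ hinj E)).symm
  rw [← heq] at hx
  obtain ⟨y, hy, rfl⟩ := hx
  have : Q (P y) = y := congrArg (fun f : H →L[ℂ] H => f y) hQP
  simpa [this] using hy

lemma clm_mul_comm_one {H : Type*} [NormedAddCommGroup H] [InnerProductSpace ℂ H]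
    [FiniteDimensional ℂ H] (P Q : H →L[ℂ] H) (h : P * Q = 1) : Q * P = 1 := by
  have h1 : (P : H →ₗ[ℂ] H) * (Q : H →ₗ[ℂ] H) = 1 := by
    ext x; exact congrArg (fun f : H →L[ℂ] H => f x) h
  have h2 := mul_eq_one_comm.1 h1
  ext x
  exact congrArg (fun f : H →ₗ[ℂ] H => f x) h2

lemma rankOne_apply' {H : Type*} [NormedAddCommGroup H] [InnerProductSpace ℂ H]
    (x f h : H) : rankOne x f h = ⟪f, h⟫_ℂ • x := by
  simp [rankOne]

lemma rankOne_prop {H : Type*} [NormedAddCommGroup H] [InnerProductSpace ℂ H]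
    (x y x' y' : H) (h : rankOne x y = rankOne x' y') (h0 : rankOne x' y' ≠ 0) :
    ∃ c : ℂ, c ≠ 0 ∧ rankOne x' y' = c • rankOne x y' := by
  have hy' : y' ≠ 0 := by
    rintro rfl; apply h0; ext z; simp [rankOne_apply']
  have h1 := congrArg (fun f : H →L[ℂ] H => f y') h
  simp only [rankOne_apply'] at h1
  have hne : ⟪y', y'⟫_ℂ ≠ 0 := inner_self_ne_zero.2 hy'
  have h2 : rankOne x' y' = (⟪y, y'⟫_ℂ / ⟪y', y'⟫_ℂ) • rankOne x y' := by
    have : x' = (⟪y, y'⟫_ℂ / ⟪y', y'⟫_ℂ) • x := by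
      rw [div_eq_inv_mul, mul_smul, h1, smul_smul, inv_mul_cancel₀ hne, one_smul]
    ext z
    simp only [smul_apply, rankOne_apply']
    rw [smul_comm, ← this]
  refine ⟨_, ?_, h2⟩
  intro hc
  rw [hc, zero_smul] at h2
  exact h0 h2

lemma opRank_conj {H : Type*} [NormedAddCommGroup H] [InnerProductSpace ℂ H]
    (S S' V V' Y : H →L[ℂ] H) (hS : S' * S = 1) (hV : V * V' = 1) :
    opRank (S * Y * V) = opRank Y := by
  have hinj : Function.Injective (S : H →ₗ[ℂ] H) := by
    intro x y hxy
    have : (S' * S) x = (S' * S) y := congrArg S' hxy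
    simpa [hS] using this
  have hr : LinearMap.range ((S * Y * V : H →L[ℂ] H) : H →ₗ[ℂ] H) =
      (LinearMap.range (Y : H →ₗ[ℂ] H)).map (S : H →ₗ[ℂ] H) := by
    ext z
    constructor
    · rintro ⟨x, rfl⟩
      exact ⟨Y (V x), ⟨V x, rfl⟩, rfl⟩
    · rintro ⟨_, ⟨x, rfl⟩, rfl⟩
      refine ⟨V' x, ?_⟩
      have : V (V' x) = x := congrArg (fun f : H →L[ℂ] H => f x) hV
      simp [this]
  unfold opRank
  rw [hr]
  exact (LinearEquiv.rank_eq (Submodule.equivMapOfInjective _ hinj _)).symm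

lemma opRank_lt {H : Type*} [NormedAddCommGroup H] [InnerProductSpace ℂ H]
    [FiniteDimensional ℂ H] (T : H →L[ℂ] H) : opRank T < Cardinal.aleph0 :=
  Module.rank_lt_aleph0 _ _

lemma isUnit_of_opRank {H : Type*} [NormedAddCommGroup H] [InnerProductSpace ℂ H]
    [FiniteDimensional ℂ H] (T : H →L[ℂ] H) (h : opRank T = opRank (1 : H →L[ℂ] H)) :
    IsUnit T := by
  have h1 : LinearMap.range ((1 : H →L[ℂ] H) : H →ₗ[ℂ] H) = ⊤ := by
    rw [LinearMap.range_eq_top]; exact fun x => ⟨x, rfl⟩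
  unfold opRank at h
  rw [h1] at h
  have h2 : LinearMap.range (T : H →ₗ[ℂ] H) = ⊤ := by
    apply Submodule.eq_top_of_finrank_eq
    rw [Module.finrank, h]
    simp [Module.finrank]
  obtain ⟨g, hg⟩ := LinearMap.exists_rightInverse_of_surjective _ h2
  have h3 : T * LinearMap.toContinuousLinearMap g = 1 := by
    ext x; exact congrArg (fun f : H →ₗ[ℂ] H => f x) hg
  exact ⟨⟨T, _, h3, clm_mul_comm_one _ _ h3⟩, rfl⟩

/-- The operator with matrix `M` in the basis `b`. -/
def opOf {H : Type*} [NormedAddCommGroup H] [InnerProductSpace ℂ H]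
    [FiniteDimensional ℂ H] {n : ℕ} (b : Module.Basis (Fin n) ℂ H)
    (M : Matrix (Fin n) (Fin n) ℂ) : H →L[ℂ] H :=
  LinearMap.toContinuousLinearMap (Matrix.toLin b b M)

section opOf
variable {H : Type*} [NormedAddCommGroup H] [InnerProductSpace ℂ H]
    [FiniteDimensional ℂ H] {n : ℕ} (b : Module.Basis (Fin n) ℂ H)

lemma opOf_mul (M N : Matrix (Fin n) (Fin n) ℂ) : opOf b (M * N) = opOf b M * opOf b N := by
  ext x
  simp [opOf, Matrix.toLin_mul b b b]

lemma opOf_one : opOf b 1 = 1 := by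
  ext x
  simp [opOf]

lemma opOf_basis (M : Matrix (Fin n) (Fin n) ℂ) (j : Fin n) :
    opOf b M (b j) = ∑ i, M i j • b i := by
  simp [opOf, Matrix.toLin_self]

lemma opOf_toMatrix (A : H →L[ℂ] H) : opOf b (LinearMap.toMatrix b b (A : H →ₗ[ℂ] H)) = A := by
  ext x
  simp [opOf]

lemma opRank_opOf (M : Matrix (Fin n) (Fin n) ℂ) : opRank (opOf b M) = (M.rank : Cardinal) := by
  rw [Matrix.rank_eq_finrank_range_toLin M b b, Module.finrank_eq_rank]
  rfl

lemma clm_ext_basis {A B : H →L[ℂ] H} (h : ∀ i, A (b i) = B (b i)) : A = B := by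
  have : (A : H →ₗ[ℂ] H) = B := b.ext h
  ext x
  exact congrArg (fun f : H →ₗ[ℂ] H => f x) this

/-- The vector representing the coordinate functional. -/
def dualVec (j : Fin n) : H :=
  (InnerProductSpace.toDual ℂ H).symm (LinearMap.toContinuousLinearMap (b.coord j))

lemma inner_dualVec (j : Fin n) (x : H) : ⟪dualVec b j, x⟫_ℂ = b.coord j x := by
  simp [dualVec]

lemma opOf_eq_sum (M : Matrix (Fin n) (Fin n) ℂ) :
    opOf b M = ∑ i, ∑ j, M i j • rankOne (b i) (dualVec b j) := by
  apply clm_ext_basis b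
  intro k
  rw [opOf_basis]
  simp [rankOne_apply', inner_dualVec, Finsupp.single_apply]

end opOf

section alg
variable {H : Type*} [NormedAddCommGroup H] [InnerProductSpace ℂ H]

lemma alg_zero (L : Set (Submodule ℂ H)) : (0 : H →L[ℂ] H) ∈ algL L :=
  fun E _ _ _ => E.zero_mem

lemma alg_one (L : Set (Submodule ℂ H)) : (1 : H →L[ℂ] H) ∈ algL L :=
  fun _ _ _ hx => hx

lemma alg_add (L : Set (Submodule ℂ H)) {A B : H →L[ℂ] H} (hA : A ∈ algL L) (hB : B ∈ algL L) :
    A + B ∈ algL L :=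
  fun E hE x hx => E.add_mem (hA E hE x hx) (hB E hE x hx)

lemma alg_smul (L : Set (Submodule ℂ H)) (c : ℂ) {A : H →L[ℂ] H} (hA : A ∈ algL L) :
    c • A ∈ algL L :=
  fun E hE x hx => E.smul_mem c (hA E hE x hx)

lemma alg_mul (L : Set (Submodule ℂ H)) {A B : H →L[ℂ] H} (hA : A ∈ algL L) (hB : B ∈ algL L) :
    A * B ∈ algL L :=
  fun E hE x hx => hA E hE _ (hB E hE x hx)

lemma phi_zero {L : Set (Submodule ℂ H)} {Φ : (H →L[ℂ] H) → (H →L[ℂ] H)}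
    (hlin : IsLinearOnAlg L Φ) : Φ 0 = 0 := by
  have := hlin.map_smul 0 0 (alg_zero L)
  simpa using this

lemma phi_sum {L : Set (Submodule ℂ H)} {Φ : (H →L[ℂ] H) → (H →L[ℂ] H)}
    (hlin : IsLinearOnAlg L Φ) {ι : Type*} (s : Finset ι) (g : ι → H →L[ℂ] H)
    (hg : ∀ i, g i ∈ algL L) : ∑ i ∈ s, g i ∈ algL L ∧ Φ (∑ i ∈ s, g i) = ∑ i ∈ s, Φ (g i) := by
  classical
  induction s using Finset.induction_on with
  | empty => simp [phi_zero hlin, alg_zero]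
  | insert a s ha ih =>
    rw [Finset.sum_insert ha, Finset.sum_insert ha, hlin.map_add _ (hg a) _ ih.1, ih.2]
    exact ⟨alg_add L (hg a) ih.1, rfl⟩

lemma phi_inj {L : Set (Submodule ℂ H)} [FiniteDimensional ℂ H]
    {Φ : (H →L[ℂ] H) → (H →L[ℂ] H)}
    (hrank : RankPreserving L Φ) {A : H →L[ℂ] H} (hA : A ∈ algL L)
    (h : Φ A = 0) : A = 0 := by
  have h1 := hrank A hA (opRank_lt A)
  rw [h] at h1
  have h2 : opRank A = 0 := by
    rw [← h1]; simp [opRank]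
  unfold opRank at h2
  have h3 := Submodule.rank_eq_zero.1 h2
  ext x
  have h4 : (A : H →ₗ[ℂ] H) x ∈ LinearMap.range (A : H →ₗ[ℂ] H) := ⟨x, rfl⟩
  rw [h3] at h4
  exact (Submodule.mem_bot ℂ).1 h4

end alg

lemma main_aux {H : Type*} [NormedAddCommGroup H] [InnerProductSpace ℂ H]
    [FiniteDimensional ℂ H]
    (L : Set (Submodule ℂ H)) (hL : IsCSL L)
    (Φ : (H →L[ℂ] H) → (H →L[ℂ] H)) (hlin : IsLinearOnAlg L Φ)
    (hrank : RankPreserving L Φ)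
    (hcons : ∀ N ∈ L, N ≠ ⊥ → minus L N ≠ ⊤ → Consistent L Φ N) :
    ∃ U V U' V' : H →L[ℂ] H, U * U' = 1 ∧ U' * U = 1 ∧ V * V' = 1 ∧ V' * V = 1 ∧
      ∀ A ∈ algL L, Φ A = U * A * V := by
  classical
  obtain ⟨n, b, hb⟩ := exists_adapted_basis L hL
  let le : Fin n → Fin n → Prop := fun i j => ∀ E ∈ L, b j ∈ E → b i ∈ E
  have le_refl : ∀ i, le i i := fun i E _ h => h
  let e : Fin n → Fin n → (H →L[ℂ] H) := fun i j => rankOne (b i) (dualVec b j)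
  have he_apply : ∀ i j x, e i j x = b.coord j x • b i := by
    intro i j x; simp only [e, rankOne_apply', inner_dualVec]
  have he_ne : ∀ i j, e i j ≠ 0 := by
    intro i j h
    have := congrArg (fun f : H →L[ℂ] H => f (b j)) h
    simp [he_apply, b.ne_zero] at this
  have he_alg : ∀ i j, le i j → e i j ∈ algL L := by
    intro i j hij E hE x hx
    rw [he_apply]
    rcases hb E hE j with h | h
    · exact E.smul_mem _ (hij E hE h)
    · rw [h x hx, zero_smul]; exact E.zero_mem
  -- local form from consistency
  have hloc : ∀ i, ∃ U V : Fin n → H, ∀ k j, le k i → le i j →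
      Φ (e k j) = rankOne (U k) (V j) := by
    intro i
    let N : Submodule ℂ H := sInf {E | E ∈ L ∧ b i ∈ E}
    have hNL : N ∈ L := hL.sInf_mem _ (fun E hE => hE.1)
    have hN : ∀ k, le k i → b k ∈ N := by
      intro k hk
      rw [Submodule.mem_sInf]
      exact fun E hE => hk E hE.1 hE.2
    have hF : ∀ j, le i j → dualVec b j ∈ (minus L N)ᗮ := by
      intro j hj
      unfold minus closedJoin
      rw [Submodule.orthogonal_closure]
      have : sSup {E | E ∈ L ∧ ¬ N ≤ E} ≤ LinearMap.ker (b.coord j) := by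
        refine sSup_le ?_
        rintro E ⟨hE, hNE⟩
        have hi : b i ∉ E := fun h => hNE (sInf_le ⟨hE, h⟩)
        have hj' : b j ∉ E := fun h => hi (hj E hE h)
        exact fun x hx => (hb E hE j).resolve_left hj' x hx
      rw [Submodule.mem_orthogonal']
      intro x hx
      rw [inner_dualVec]
      exact this hx
    have hd : ∀ j, dualVec b j ≠ 0 := by
      intro j h
      have := inner_dualVec b j (b j)
      simp [h] at this
    have hNbot : N ≠ ⊥ := by
      intro h
      have := hN i (le_refl i)
      rw [h] at this
      exact b.ne_zero i ((Submodule.mem_bot ℂ).1 this)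
    have hNtop : minus L N ≠ ⊤ := by
      intro h
      have := hF i (le_refl i)
      rw [h, Submodule.top_orthogonal_eq_bot] at this
      exact hd i ((Submodule.mem_bot ℂ).1 this)
    obtain ⟨-, -, U, V, hUV⟩ := hcons N hNL hNbot hNtop
    refine ⟨fun k => if h : le k i then U ⟨b k, hN k h⟩ else 0,
      fun j => if h : le i j then V ⟨dualVec b j, hF j h⟩ else 0, ?_⟩
    intro k j hk hj
    simp only [dif_pos hk, dif_pos hj]
    exact hUV ⟨b k, hN k hk⟩ ⟨dualVec b j, hF j hj⟩
  choose U V hUV using hloc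
  let u : Fin n → H := fun i => U i i
  let v : Fin n → H := fun i => V i i
  have hc : ∀ i j, ∃ c : ℂ, le i j → c ≠ 0 ∧ Φ (e i j) = c • rankOne (u i) (v j) := by
    intro i j
    by_cases hij : le i j
    · have h1 := hUV i i j (le_refl i) hij
      have h2 := hUV j i j hij (le_refl j)
      have h3 : Φ (e i j) ≠ 0 := fun h => he_ne i j (phi_inj hrank (he_alg i j hij) h)
      obtain ⟨c, hc0, hc⟩ := rankOne_prop (U i i) (V i j) (U j i) (V j j) (h1.symm.trans h2)
        (h2 ▸ h3)
      exact ⟨c, fun _ => ⟨hc0, h2.trans hc⟩⟩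
    · exact ⟨0, fun h => absurd h hij⟩
  choose c hc using hc
  have hcii : ∀ i, c i i = 1 := by
    intro i
    have h1 : Φ (e i i) = rankOne (u i) (v i) := hUV i i i (le_refl i) (le_refl i)
    have h2 := (hc i i (le_refl i)).2
    have h3 : Φ (e i i) ≠ 0 := fun h => he_ne i i (phi_inj hrank (he_alg i i (le_refl i)) h)
    rw [h1] at h2 h3
    have : (c i i - 1) • rankOne (u i) (v i) = 0 := by
      rw [sub_smul, one_smul, ← h2, sub_self]
    exact sub_eq_zero.1 ((smul_eq_zero.1 this).resolve_right h3)
  let S : H →L[ℂ] H := ∑ k, rankOne (u k) (dualVec b k)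
  let W : H →L[ℂ] H := ∑ k, rankOne (b k) (v k)
  have hSb : ∀ k, S (b k) = u k := by
    intro k
    simp [S, rankOne_apply', inner_dualVec, Finsupp.single_apply]
  -- global form
  have hglob : ∀ M : Matrix (Fin n) (Fin n) ℂ, (∀ i j, ¬ le i j → M i j = 0) →
      opOf b M ∈ algL L ∧
      Φ (opOf b M) = S * opOf b (Matrix.of fun i j => c i j * M i j) * W := by
    intro M hM
    have hterm : ∀ i j, M i j • e i j ∈ algL L := by
      intro i j
      by_cases h : le i j
      · exact alg_smul L _ (he_alg i j h)
      · rw [hM i j h, zero_smul]; exact alg_zero L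
    have hs1 := fun i => phi_sum hlin Finset.univ (fun j => M i j • e i j) (hterm i)
    have hs2 := phi_sum hlin Finset.univ (fun i => ∑ j, M i j • e i j) (fun i => (hs1 i).1)
    rw [opOf_eq_sum]
    refine ⟨hs2.1, hs2.2.trans ?_⟩
    have hΦ : ∀ i j, Φ (M i j • e i j) = (c i j * M i j) • rankOne (u i) (v j) := by
      intro i j
      by_cases h : le i j
      · rw [hlin.map_smul _ _ (he_alg i j h), (hc i j h).2, smul_smul, mul_comm]
      · rw [hM i j h, zero_smul, phi_zero hlin, mul_zero, zero_smul]
    simp only [(hs1 _).2, hΦ]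
    ext x
    have hWx : W x = ∑ k, ⟪v k, x⟫_ℂ • b k := by
      simp [W, rankOne_apply']
    have hmulx : ∀ Y : H →L[ℂ] H, (S * Y * W) x = S (Y (W x)) := fun _ => rfl
    simp only [hmulx, sum_apply, smul_apply, rankOne_apply', hWx, map_sum, map_smul, opOf_basis,
      hSb, Matrix.of_apply]
    rw [Finset.sum_comm]
    refine Finset.sum_congr rfl fun j _ => ?_
    rw [Finset.smul_sum]
    refine Finset.sum_congr rfl fun i _ => ?_
    rw [smul_comm]
  have hmat : ∀ A ∈ algL L, ∀ i j, ¬ le i j →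
      LinearMap.toMatrix b b (A : H →ₗ[ℂ] H) i j = 0 := by
    intro A hA i j hij
    simp only [le, not_forall] at hij
    obtain ⟨E, hE, hj, hi⟩ := hij
    rw [LinearMap.toMatrix_apply]
    exact (hb E hE i).resolve_left hi _ (hA E hE _ hj)
  have hone : Φ 1 = S * W := by
    have := (hglob 1 (by
      intro i j hij
      rw [Matrix.one_apply_ne]
      rintro rfl
      exact hij (le_refl i))).2
    have h1 : (Matrix.of fun i j => c i j * (1 : Matrix (Fin n) (Fin n) ℂ) i j) = 1 := by
      ext i j
      by_cases hij : i = j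
      · subst hij; simp [hcii]
      · simp [hij]
    rw [h1, opOf_one, mul_one] at this
    exact this
  have hunit : IsUnit (Φ 1) := isUnit_of_opRank _ (hrank 1 (alg_one L) (opRank_lt _))
  obtain ⟨P, hP⟩ := hunit
  have hSW : S * (W * (P⁻¹ : (H →L[ℂ] H)ˣ)) = 1 := by
    rw [← mul_assoc, ← hone, ← hP]; simp
  have hSW' := clm_mul_comm_one _ _ hSW
  have hWS : ((P⁻¹ : (H →L[ℂ] H)ˣ) * S) * W = 1 := by
    rw [mul_assoc, ← hone, ← hP]; simp
  have hWS' := clm_mul_comm_one _ _ hWS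
  let R : Finset (Fin n × Fin n) := Finset.univ.filter fun p => le p.1 p.2
  have hR : ∀ p, p ∈ R ↔ le p.1 p.2 := fun p => by simp [R]
  obtain ⟨s, t, hs, ht, hst⟩ := coboundary c R (fun p hp => (hc _ _ ((hR p).1 hp)).1) (by
    intro M hM
    have hg := hglob M (fun i j hij => hM (i, j) (fun h => hij ((hR _).1 h)))
    have h1 := hrank _ hg.1 (opRank_lt _)
    rw [hg.2, opRank_conj _ _ _ _ _ hSW' hWS', opRank_opOf, opRank_opOf] at h1
    exact_mod_cast h1)
  have hst1 : ∀ i, s i * t i = 1 := by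
    intro i
    rw [← hcii i]; exact (hst (i, i) ((hR _).2 (le_refl i))).symm
  have hDD' : opOf b (Matrix.diagonal s) * opOf b (Matrix.diagonal t) = 1 := by
    rw [← opOf_mul, Matrix.diagonal_mul_diagonal]
    simp [hst1, opOf_one]
  have hD'D := clm_mul_comm_one _ _ hDD'
  set D := opOf b (Matrix.diagonal s)
  set D' := opOf b (Matrix.diagonal t)
  have hU : S * D * (D' * (W * (P⁻¹ : (H →L[ℂ] H)ˣ))) = 1 := by
    rw [mul_assoc S, ← mul_assoc D, hDD', one_mul, hSW]
  have hV : ((P⁻¹ : (H →L[ℂ] H)ˣ) * S * D) * (D' * W) = 1 := by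
    rw [mul_assoc _ D, ← mul_assoc D, hDD', one_mul, hWS]
  refine ⟨S * D, D' * W, _, _, hU, clm_mul_comm_one _ _ hU, clm_mul_comm_one _ _ hV, hV, ?_⟩
  intro A hA
  have hg := (hglob _ (hmat A hA)).2
  rw [opOf_toMatrix] at hg
  rw [hg]
  have : (Matrix.of fun i j => c i j * LinearMap.toMatrix b b (A : H →ₗ[ℂ] H) i j) =
      Matrix.diagonal s * LinearMap.toMatrix b b (A : H →ₗ[ℂ] H) * Matrix.diagonal t := by
    ext i j
    rw [Matrix.mul_diagonal, Matrix.diagonal_mul, Matrix.of_apply]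
    by_cases hij : le i j
    · rw [show c i j = s i * t j from hst (i, j) ((hR _).2 hij)]; ring
    · rw [hmat A hA i j hij]; ring
  rw [this, opOf_mul, opOf_mul, opOf_toMatrix]
  simp only [mul_assoc, D, D']

end Helpers

theorem stmt_16 {H : Type*} [NormedAddCommGroup H] [InnerProductSpace ℂ H]
    [FiniteDimensional ℂ H]
    (L : Set (Submodule ℂ H)) (hL : IsCSL L)
    (Φ : (H →L[ℂ] H) → (H →L[ℂ] H)) (hlin : IsLinearOnAlg L Φ)
    (hrank : RankPreserving L Φ)
    (hcons : ∀ N ∈ L, N ≠ ⊥ → minus L N ≠ ⊤ → Consistent L Φ N) :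
    IsUnit (Φ 1) ∧
    (∀ A ∈ algL L, A * Ring.inverse (Φ 1) ∈ algL L) ∧
    ∃ U : H →L[ℂ] H, IsUnit U ∧
      (∀ A ∈ algL L, Φ A * Ring.inverse (Φ 1) = U * A * Ring.inverse U) ∧
      (Φ 1 * Ring.inverse (Φ 1) = 1) ∧
      (∀ A ∈ algL L, ∀ B ∈ algL L,
        Φ (A * B) * Ring.inverse (Φ 1)
          = (Φ A * Ring.inverse (Φ 1)) * (Φ B * Ring.inverse (Φ 1))) ∧
      (∀ (c : ℂ), ∀ A ∈ algL L, ∀ B ∈ algL L,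
        Φ (c • A + B) * Ring.inverse (Φ 1)
          = c • (Φ A * Ring.inverse (Φ 1)) + Φ B * Ring.inverse (Φ 1)) ∧
      (∀ A ∈ algL L, ∀ B ∈ algL L,
        Φ A * Ring.inverse (Φ 1) = Φ B * Ring.inverse (Φ 1) → A = B) := by
  obtain ⟨U, V, U', V', h1, h2, h3, h4, hΦ⟩ := main_aux L hL Φ hlin hrank hcons
  have hone : Φ 1 = U * V := by rw [hΦ 1 (alg_one L), mul_one]
  let P : (H →L[ℂ] H)ˣ := ⟨U * V, V' * U', by
    rw [mul_assoc, ← mul_assoc V, h3, one_mul, h1], by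
    rw [mul_assoc, ← mul_assoc U', h2, one_mul, h4]⟩
  let Q : (H →L[ℂ] H)ˣ := ⟨U, U', h1, h2⟩
  have hinv : Ring.inverse (Φ 1) = V' * U' := by
    rw [hone]; exact Ring.inverse_unit P
  have hinvU : Ring.inverse U = U' := Ring.inverse_unit Q
  have hunit : IsUnit (Φ 1) := by rw [hone]; exact ⟨P, rfl⟩
  have hform : ∀ A ∈ algL L, Φ A * Ring.inverse (Φ 1) = U * A * U' := by
    intro A hA
    rw [hΦ A hA, hinv, mul_assoc (U * A), ← mul_assoc V, h3, one_mul]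
  refine ⟨hunit, ?_, U, ⟨Q, rfl⟩, ?_, ?_, ?_, ?_, ?_⟩
  · intro A hA
    exact alg_mul L hA (inverse_mem_alg L (Φ 1) _ (hlin.maps 1 (alg_one L))
      (Ring.inverse_mul_cancel _ hunit))
  · intro A hA
    rw [hform A hA, hinvU]
  · exact Ring.mul_inverse_cancel _ hunit
  · intro A hA B hB
    rw [hform _ (alg_mul L hA hB), hform A hA, hform B hB]
    have : U * A * U' * (U * B * U') = U * A * (U' * U) * B * U' := by
      simp only [mul_assoc]
    rw [this, h2, mul_one, mul_assoc U A B]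
  · intro c A hA B hB
    rw [hlin.map_add _ (alg_smul L c hA) _ hB, hlin.map_smul c A hA, add_mul, smul_mul_assoc]
  · intro A hA B hB h
    rw [hform A hA, hform B hB] at h
    have h5 : U' * (U * A * U') * U = U' * (U * B * U') * U := by rw [h]
    have h6 : ∀ X : H →L[ℂ] H, U' * (U * X * U') * U = X := by
      intro X
      have : U' * (U * X * U') * U = (U' * U) * X * (U' * U) := by simp only [mul_assoc]
      rw [this, h2, one_mul, mul_one]
    rwa [h6, h6] at h5
end

section
/- Let L be a completely distributive commutative subspace lattice on a complex separable Hilbert space H. Then ⋁{N : N ∈ L, N₋ ≠ H} = H and ⋁{N₋^⊥ : N ∈ L, N ≠ {0}} = H, where joins are closed linear spans. -/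
open scoped InnerProductSpace

/-- A family of closed subspaces of a separable space is essentially small. -/
theorem small_of_closed {H : Type*} [NormedAddCommGroup H] [InnerProductSpace ℂ H]
    [TopologicalSpace.SeparableSpace H]
    (L : Set (Submodule ℂ H)) (hL : ∀ E ∈ L, IsClosed (E : Set H)) : Small.{0} L := by
  haveI : SecondCountableTopology H := UniformSpace.secondCountable_of_separable H
  obtain ⟨b, hbc, -, hb⟩ := TopologicalSpace.exists_countable_basis H
  haveI : Countable b := hbc.to_subtype
  haveI : Small.{0} b := inferInstance
  have hinj : Function.Injective
      (fun E : L => {u : b | Disjoint (u : Set H) ((E : Submodule ℂ H) : Set H)}) := by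
    have key : ∀ E F : L,
        {u : b | Disjoint (u : Set H) ((E : Submodule ℂ H) : Set H)} =
          {u : b | Disjoint (u : Set H) ((F : Submodule ℂ H) : Set H)} →
        (E : Submodule ℂ H) ≤ F := by
      intro E F h x hx
      by_contra hxF
      obtain ⟨u, hu, hxu, huF⟩ := hb.exists_subset_of_mem_open
        (show x ∈ (((F : Submodule ℂ H) : Set H))ᶜ from hxF) (hL F F.2).isOpen_compl
      have h1 : (⟨u, hu⟩ : b) ∈
          {u : b | Disjoint (u : Set H) ((F : Submodule ℂ H) : Set H)} :=
        Set.disjoint_left.2 fun y hy => huF hy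
      rw [← h] at h1
      exact Set.disjoint_left.1 h1 hxu hx
    intro E F h
    exact Subtype.ext (le_antisymm (key E F h) (key F E h.symm))
  exact small_of_injective hinj

theorem closedJoin_le {H : Type*} [NormedAddCommGroup H] [InnerProductSpace ℂ H]
    {S : Set (Submodule ℂ H)} {F : Submodule ℂ H} (hF : IsClosed (F : Set H))
    (h : ∀ E ∈ S, E ≤ F) : closedJoin S ≤ F :=
  Submodule.topologicalClosure_minimal _ (sSup_le h) hF

theorem le_closedJoin {H : Type*} [NormedAddCommGroup H] [InnerProductSpace ℂ H]
    {S : Set (Submodule ℂ H)} {E : Submodule ℂ H} (h : E ∈ S) : E ≤ closedJoin S :=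
  (le_sSup h).trans (Submodule.le_topologicalClosure _)

theorem isClosed_closedJoin {H : Type*} [NormedAddCommGroup H] [InnerProductSpace ℂ H]
    (S : Set (Submodule ℂ H)) : IsClosed (closedJoin S : Set H) :=
  Submodule.isClosed_topologicalClosure _

theorem stmt_18 {H : Type*} [NormedAddCommGroup H] [InnerProductSpace ℂ H]
    [CompleteSpace H] [TopologicalSpace.SeparableSpace H]
    (L : Set (Submodule ℂ H)) (hL : IsCSL L) (hcd : IsCompletelyDistributive L) :
    closedJoin {N | N ∈ L ∧ minus L N ≠ ⊤} = ⊤ ∧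
    closedJoin ((fun N => ((minus L N)ᗮ : Submodule ℂ H)) '' {N | N ∈ L ∧ N ≠ ⊥}) = ⊤ := by
  have hS := hL.toIsSubspaceLattice
  haveI := small_of_closed L hS.isClosed
  let e : Shrink.{0} L → Submodule ℂ H := fun s => ((equivShrink L).symm s : L)
  have he : ∀ s, e s ∈ L := fun s => ((equivShrink L).symm s).2
  have hsurj : ∀ E ∈ L, ∃ s, e s = E := fun E hE =>
    ⟨equivShrink L ⟨E, hE⟩, by simp [e]⟩
  constructor
  · have h := (hcd {s : Shrink.{0} L // e s ≠ ⊤} (fun F => {s : Shrink.{0} L // ¬ e s ≤ e F.1})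
      (fun _ s => e s.1) (fun _ s => he s.1)).2
    have h2 : (⨅ φ : (∀ F : {s : Shrink.{0} L // e s ≠ ⊤}, {s : Shrink.{0} L // ¬ e s ≤ e F.1}),
        closedJoin (Set.range fun i => e (φ i).1)) = ⊤ := by
      refine iInf_eq_top.2 fun φ => ?_
      by_contra hne
      obtain ⟨s, hs⟩ := hsurj _ (hS.join_mem (Set.range fun i => e (φ i).1)
        (by rintro _ ⟨i, rfl⟩; exact he _))
      rw [← hs] at hne
      apply (φ ⟨s, hne⟩).2
      exact le_trans (le_closedJoin (Set.mem_range_self (⟨s, hne⟩ : {s : Shrink.{0} L // e s ≠ ⊤}))) hs.ge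
    rw [h2] at h
    refine eq_top_iff.2 (h.ge.trans ?_)
    refine closedJoin_le (isClosed_closedJoin _) ?_
    rintro _ ⟨F, rfl⟩
    refine le_closedJoin ⟨?_, ?_⟩
    · exact hS.sInf_mem _ (by rintro _ ⟨i, rfl⟩; exact he _)
    · intro htop
      apply F.2
      refine eq_top_iff.2 (htop.ge.trans ?_)
      refine closedJoin_le (hS.isClosed _ (he _)) ?_
      rintro E ⟨hE, hEn⟩
      by_contra hEF
      obtain ⟨s, rfl⟩ := hsurj E hE
      exact hEn (iInf_le (fun j : {s : Shrink.{0} L // ¬ e s ≤ e F.1} => e j.1) ⟨s, hEF⟩)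
  · have h := (hcd {s : Shrink.{0} L // e s ≠ ⊥} (fun N => {s : Shrink.{0} L // ¬ e N.1 ≤ e s})
      (fun _ s => e s.1) (fun _ s => he s.1)).1
    have h2 : closedJoin (Set.range fun φ : (∀ N : {s : Shrink.{0} L // e s ≠ ⊥},
        {s : Shrink.{0} L // ¬ e N.1 ≤ e s}) => ⨅ i, e (φ i).1) = ⊥ := by
      rw [eq_bot_iff]
      refine closedJoin_le (hS.isClosed _ hS.bot_mem) ?_
      rintro _ ⟨φ, rfl⟩
      rw [le_bot_iff]
      by_contra hne
      obtain ⟨s, hs⟩ := hsurj (⨅ i, e (φ i).1)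
        (hS.sInf_mem _ (by rintro _ ⟨i, rfl⟩; exact he _))
      change ¬ (⨅ i, e (φ i).1) = ⊥ at hne
      rw [← hs] at hne
      apply (φ ⟨s, hne⟩).2
      exact hs.le.trans <| iInf_le (fun i => e (φ i).1) ⟨s, hne⟩
    rw [h2] at h
    unfold closedJoin
    rw [Submodule.topologicalClosure_eq_top_iff, eq_bot_iff]
    refine le_trans ?_ h.le
    refine le_iInf fun N => ?_
    have h3 : minus L (e N.1) ≤
        closedJoin (Set.range fun s : {s : Shrink.{0} L // ¬ e N.1 ≤ e s} => e s.1) := by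
      refine closedJoin_le (isClosed_closedJoin _) ?_
      rintro E ⟨hE, hEn⟩
      obtain ⟨s, rfl⟩ := hsurj E hE
      exact le_closedJoin ⟨⟨s, hEn⟩, rfl⟩
    refine le_trans ?_ h3
    haveI : CompleteSpace (minus L (e N.1)) :=
      (isClosed_closedJoin {E | E ∈ L ∧ ¬ e N.1 ≤ E}).completeSpace_coe
    rw [← Submodule.orthogonal_orthogonal (minus L (e N.1))]
    exact Submodule.orthogonal_le (le_sSup ⟨e N.1, ⟨he _, N.2⟩, rfl⟩)
end
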